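/- Let C be a regular Ord-category, R, S: X ↬ Y ideals, and g: B→Y, f: A→X, k: Y→B, h: X→A morphisms. Then: (1) g^*∘(R∧S) ≅ (g^*∘R) ∧ (g^*∘S); (2) (R∧S)∘f_* ≅ (R∘f_*) ∧ (S∘f_*); (3) k_*∘(R∧S) ⊆ (k_*∘R) ∧ (k_*∘S); (4) (R∧S)∘h^* ⊆ (R∘h^*) ∧ (S∘h^*). -/

import Mathlib

open CategoryTheory

universe w v u

/-- An `Ord`-enrichment of a category: a preorder on each hom-set,
preserved by composition on both sides. -/
class OrdEnrichment (C : Type u) [Category.{v} C] : Type (max u v) where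
  ord : ∀ {X Y : C}, (X ⟶ Y) → (X ⟶ Y) → Prop
  ord_refl : ∀ {X Y : C} (f : X ⟶ Y), ord f f
  ord_trans : ∀ {X Y : C} {f g h : X ⟶ Y}, ord f g → ord g h → ord f h
  precomp_ord : ∀ {X Y Z : C} (e : X ⟶ Y) {f g : Y ⟶ Z}, ord f g → ord (e ≫ f) (e ≫ g)
  postcomp_ord : ∀ {X Y Z : C} {f g : X ⟶ Y} (h : Y ⟶ Z), ord f g → ord (f ≫ h) (g ≫ h)

/-- The preorder on hom-sets of an `Ord`-category. -/
def homLe {C : Type u} [Category.{v} C] [OrdEnrichment C] {X Y : C} (f g : X ⟶ Y) : Prop :=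
  OrdEnrichment.ord f g

infixl:50 " ≼ " => homLe

section

variable {C : Type u} [Category.{v} C] [OrdEnrichment C]

/-- A full (ff-) morphism. -/
def IsFF {X Y : C} (m : X ⟶ Y) : Prop :=
  ∀ {A : C} (a a' : A ⟶ X), (a ≫ m) ≼ (a' ≫ m) → a ≼ a'

/-- An ff-monomorphism: a full monomorphism. -/
def IsFFMono {X Y : C} (m : X ⟶ Y) : Prop := IsFF m ∧ Mono m

/-- An so-morphism: a morphism left orthogonal to every ff-monomorphism. -/
def IsSO {A B : C} (e : A ⟶ B) : Prop :=
  ∀ {X Y : C} (m : X ⟶ Y), IsFFMono m → ∀ (u : A ⟶ X) (v : B ⟶ Y),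
    u ≫ m = e ≫ v → ∃ d : B ⟶ X, e ≫ d = u ∧ d ≫ m = v

/-- The (strict) comma object square for the ordered pair `(f, g)`. -/
structure IsCommaSq {X Y Z : C} (f : X ⟶ Y) (g : Z ⟶ Y) (P : C)
    (π₁ : P ⟶ X) (π₂ : P ⟶ Z) : Prop where
  le : (π₁ ≫ f) ≼ (π₂ ≫ g)
  lift : ∀ {A : C} (α : A ⟶ X) (β : A ⟶ Z), (α ≫ f) ≼ (β ≫ g) →
    ∃! h : A ⟶ P, h ≫ π₁ = α ∧ h ≫ π₂ = β
  lift_ord : ∀ {A : C} {h h' : A ⟶ P}, (h ≫ π₁) ≼ (h' ≫ π₁) → (h ≫ π₂) ≼ (h' ≫ π₂) → h ≼ h'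

/-- A 2-pullback square (pullback with the `Ord`-enriched universal property). -/
structure Is2Pullback {X Y Z : C} (f : X ⟶ Z) (g : Y ⟶ Z) (P : C)
    (p : P ⟶ X) (q : P ⟶ Y) : Prop where
  comm : p ≫ f = q ≫ g
  lift : ∀ {A : C} (a : A ⟶ X) (b : A ⟶ Y), a ≫ f = b ≫ g →
    ∃! h : A ⟶ P, h ≫ p = a ∧ h ≫ q = b
  lift_ord : ∀ {A : C} {h h' : A ⟶ P}, (h ≫ p) ≼ (h' ≫ p) → (h ≫ q) ≼ (h' ≫ q) → h ≼ h'

/-- A binary 2-product. -/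
structure Is2Product (X Y : C) (P : C) (p : P ⟶ X) (q : P ⟶ Y) : Prop where
  lift : ∀ {A : C} (a : A ⟶ X) (b : A ⟶ Y), ∃! h : A ⟶ P, h ≫ p = a ∧ h ≫ q = b
  lift_ord : ∀ {A : C} {h h' : A ⟶ P}, (h ≫ p) ≼ (h' ≫ p) → (h ≫ q) ≼ (h' ≫ q) → h ≼ h'

/-- A 2-equalizer. -/
structure Is2Equalizer {X Y : C} (f g : X ⟶ Y) (E : C) (i : E ⟶ X) : Prop where
  comm : i ≫ f = i ≫ g
  lift : ∀ {A : C} (a : A ⟶ X), a ≫ f = a ≫ g → ∃! h : A ⟶ E, h ≫ i = a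
  lift_ord : ∀ {A : C} {h h' : A ⟶ E}, (h ≫ i) ≼ (h' ≫ i) → h ≼ h'

/-- A bicoinserter of a parallel pair. -/
structure IsBicoinserter {X A E : C} (a b : X ⟶ A) (e : A ⟶ E) : Prop where
  le : (a ≫ e) ≼ (b ≫ e)
  desc : ∀ {F : C} (f : A ⟶ F), (a ≫ f) ≼ (b ≫ f) →
    ∃ t : E ⟶ F, (e ≫ t) ≼ f ∧ f ≼ (e ≫ t)
  desc_ord : ∀ {F : C} {f f' : A ⟶ F} {t t' : E ⟶ F},
    (e ≫ t) ≼ f → f ≼ (e ≫ t) → (e ≫ t') ≼ f' → f' ≼ (e ≫ t') → f ≼ f' → t ≼ t'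

/-- A relation from `X` to `Y` in an `Ord`-category: a jointly ff-monomorphic span. -/
structure RelStr (X Y : C) : Type (max u v) where
  obj : C
  p : obj ⟶ X
  q : obj ⟶ Y
  jointly_ff : ∀ {A : C} (a a' : A ⟶ obj), (a ≫ p) ≼ (a' ≫ p) → (a ≫ q) ≼ (a' ≫ q) → a ≼ a'
  jointly_mono : ∀ {A : C} (a a' : A ⟶ obj), a ≫ p = a' ≫ p → a ≫ q = a' ≫ q → a = a'

/-- `(x, y) ∈_A R`. -/
def RelStr.Mem {X Y : C} (R : RelStr X Y) {A : C} (x : A ⟶ X) (y : A ⟶ Y) : Prop :=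
  ∃ h : A ⟶ R.obj, h ≫ R.p = x ∧ h ≫ R.q = y

/-- `R ⊆ S`: `R` factors through `S` (over `X × Y`). -/
def RelStr.Sub {X Y : C} (R S : RelStr X Y) : Prop :=
  ∃ φ : R.obj ⟶ S.obj, φ ≫ S.p = R.p ∧ φ ≫ S.q = R.q

/-- `R ≅ S`: mutual factorisation. -/
def RelStr.Iso {X Y : C} (R S : RelStr X Y) : Prop := R.Sub S ∧ S.Sub R

/-- The opposite relation `R°`. -/
def RelStr.op {X Y : C} (R : RelStr X Y) : RelStr Y X where
  obj := R.obj
  p := R.q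
  q := R.p
  jointly_ff := fun a a' h1 h2 => R.jointly_ff a a' h2 h1
  jointly_mono := fun a a' h1 h2 => R.jointly_mono a a' h2 h1

/-- A relation is an (order) ideal when it is closed under lowering the first
coordinate and raising the second coordinate. -/
def IsIdealRel {X Y : C} (R : RelStr X Y) : Prop :=
  ∀ {A : C} (x x' : A ⟶ X) (y y' : A ⟶ Y), x' ≼ x → R.Mem x y → y ≼ y' → R.Mem x' y'

/-- The relation `f_♯` given by the span `(1_X, f)`. -/
def sharpRel {X Y : C} (f : X ⟶ Y) : RelStr X Y where
  obj := X
  p := 𝟙 X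
  q := f
  jointly_ff := fun a a' h1 _ => by simpa using h1
  jointly_mono := fun a a' h1 _ => by simpa using h1

/-- The relation `f°`, the opposite of `f_♯`. -/
def cosharpRel {X Y : C} (f : X ⟶ Y) : RelStr Y X := (sharpRel f).op

/-- `M` is the meet (intersection) `R ∧ S` of two relations. -/
def IsMeetRel {X Y : C} (R S M : RelStr X Y) : Prop :=
  M.Sub R ∧ M.Sub S ∧
    ∀ {A : C} (x : A ⟶ X) (y : A ⟶ Y), R.Mem x y → S.Mem x y → M.Mem x y

/-- `T` is the composite `S ∘ R` of the relations `R : X ↬ Y` and `S : Y ↬ Z`,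
obtained via the (so-morphism, ff-monomorphism) factorisation of the span
given by the 2-pullback over the middle object. -/
def IsCompositeRel {X Y Z : C} (R : RelStr X Y) (S : RelStr Y Z) (T : RelStr X Z) : Prop :=
  ∃ (P : C) (p₁ : P ⟶ R.obj) (p₂ : P ⟶ S.obj) (e : P ⟶ T.obj),
    Is2Pullback R.q S.p P p₁ p₂ ∧ IsSO e ∧ e ≫ T.p = p₁ ≫ R.p ∧ e ≫ T.q = p₂ ≫ S.q

/-- `R` is the ideal `f_* = f / 1_Y : X ↬ Y`. -/
def IsStarRel {X Y : C} (f : X ⟶ Y) (R : RelStr X Y) : Prop :=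
  IsCommaSq f (𝟙 Y) R.obj R.p R.q

/-- `R` is the ideal `f^* = 1_Y / f : Y ↬ X`. -/
def IsCostarRel {X Y : C} (f : X ⟶ Y) (R : RelStr Y X) : Prop :=
  IsCommaSq (𝟙 Y) f R.obj R.p R.q

/-- `R` is the identity ideal `I_X = 1_X / 1_X`. -/
def IsIdRel (X : C) (R : RelStr X X) : Prop :=
  IsCommaSq (𝟙 X) (𝟙 X) R.obj R.p R.q

/-- `S` is the 2-pullback of the relation `R ↣ X × Y` along `f × g`. -/
def IsRelPullback {X Y U V : C} (R : RelStr X Y) (f : U ⟶ X) (g : V ⟶ Y)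
    (S : RelStr U V) : Prop :=
  ∃ h : S.obj ⟶ R.obj, h ≫ R.p = S.p ≫ f ∧ h ≫ R.q = S.q ≫ g ∧
    ∀ {A : C} (a : A ⟶ U) (b : A ⟶ V) (c : A ⟶ R.obj),
      c ≫ R.p = a ≫ f → c ≫ R.q = b ≫ g →
      ∃ d : A ⟶ S.obj, d ≫ S.p = a ∧ d ≫ S.q = b ∧ d ≫ h = c

/-- A binary 2-coproduct. -/
structure Is2Coproduct (X Y : C) (P : C) (i : X ⟶ P) (j : Y ⟶ P) : Prop where
  desc : ∀ {A : C} (a : X ⟶ A) (b : Y ⟶ A), ∃! h : P ⟶ A, i ≫ h = a ∧ j ≫ h = b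
  desc_ord : ∀ {A : C} {h h' : P ⟶ A}, (i ≫ h) ≼ (i ≫ h') → (j ≫ h) ≼ (j ≫ h') → h ≼ h'

/-- A ternary 2-coproduct. -/
structure Is3Coproduct (X Y Z : C) (P : C) (i : X ⟶ P) (j : Y ⟶ P) (k : Z ⟶ P) : Prop where
  desc : ∀ {A : C} (a : X ⟶ A) (b : Y ⟶ A) (c : Z ⟶ A),
    ∃! h : P ⟶ A, i ≫ h = a ∧ j ≫ h = b ∧ k ≫ h = c
  desc_ord : ∀ {A : C} {h h' : P ⟶ A},
    (i ≫ h) ≼ (i ≫ h') → (j ≫ h) ≼ (j ≫ h') → (k ≫ h) ≼ (k ≫ h') → h ≼ h'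

/-- Reflexivity of a relation on `X`: the diagonal factors through it. -/
def ReflexiveRel {X : C} (R : RelStr X X) : Prop := R.Mem (𝟙 X) (𝟙 X)

/-- Transitivity of a relation on `X`: `R ∘ R ⊆ R`. -/
def TransitiveRel {X : C} (R : RelStr X X) : Prop :=
  ∀ T : RelStr X X, IsCompositeRel R R T → T.Sub R

/-- A congruence: a reflexive and transitive ideal. -/
def IsCongruence {X : C} (R : RelStr X X) : Prop :=
  IsIdealRel R ∧ ReflexiveRel R ∧ TransitiveRel R

/-- An effective congruence: `R ≅ f^* ∘ f_*` for some morphism `f`. -/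
def EffectiveCongruence {X : C} (R : RelStr X X) : Prop :=
  ∃ (Y : C) (f : X ⟶ Y) (Fstar : RelStr X Y) (Fco : RelStr Y X) (T : RelStr X X),
    IsStarRel f Fstar ∧ IsCostarRel f Fco ∧ IsCompositeRel Fstar Fco T ∧ R.Iso T

/-- The `Ord`-enriched difunctionality property of a relation. -/
def OrdDifunctional {X Y : C} (D : RelStr X Y) : Prop :=
  ∀ {A : C} (x u u' : A ⟶ X) (y y' v : A ⟶ Y),
    D.Mem x y → y ≼ y' → D.Mem u y' → u ≼ u' → D.Mem u' v → D.Mem x v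

end

/-- A regular `Ord`-category: finite weighted limits, an
(so-morphism, ff-monomorphism) factorisation system, so-morphisms stable under
2-pullbacks, and every so-morphism the bicoinserter of its comma object projections. -/
structure IsRegularOrd (C : Type u) [Category.{v} C] [OrdEnrichment C] : Prop where
  hasTerminal : ∃ T : C, ∀ A : C, ∃ f : A ⟶ T, ∀ g : A ⟶ T, g = f
  has2Products : ∀ X Y : C, ∃ (P : C) (p : P ⟶ X) (q : P ⟶ Y), Is2Product X Y P p q
  has2Equalizers : ∀ {X Y : C} (f g : X ⟶ Y), ∃ (E : C) (i : E ⟶ X), Is2Equalizer f g E i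
  has2Pullbacks : ∀ {X Y Z : C} (f : X ⟶ Z) (g : Y ⟶ Z),
    ∃ (P : C) (p : P ⟶ X) (q : P ⟶ Y), Is2Pullback f g P p q
  hasCommaObjects : ∀ {X Y Z : C} (f : X ⟶ Y) (g : Z ⟶ Y),
    ∃ (P : C) (p : P ⟶ X) (q : P ⟶ Z), IsCommaSq f g P p q
  fact : ∀ {X Y : C} (f : X ⟶ Y), ∃ (I : C) (e : X ⟶ I) (m : I ⟶ Y),
    IsSO e ∧ IsFFMono m ∧ e ≫ m = f
  so_pullback_stable : ∀ {X Y Z P : C} (f : X ⟶ Z) (g : Y ⟶ Z) (p : P ⟶ X) (q : P ⟶ Y),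
    Is2Pullback f g P p q → IsSO g → IsSO p
  so_bicoinserter : ∀ {A B P : C} (e : A ⟶ B), IsSO e →
    ∀ (π₁ π₂ : P ⟶ A), IsCommaSq e e P π₁ π₂ → IsBicoinserter π₁ π₂ e

/-- An `Ord`-Mal'tsev category: every ideal is `Ord`-difunctional. -/
def IsOrdMaltsev (C : Type u) [Category.{v} C] [OrdEnrichment C] : Prop :=
  ∀ (X Y : C) (D : RelStr X Y), IsIdealRel D → OrdDifunctional D

/-- An `Ord`-W-Mal'tsev object: every ideal is `Ord`-difunctional with respect to
generalised elements with domain `Y`. -/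
def IsOrdWMaltsevObj {C : Type u} [Category.{v} C] [OrdEnrichment C] (Y : C) : Prop :=
  ∀ (X Z : C) (R : RelStr X Z), IsIdealRel R →
    ∀ (x u u' : Y ⟶ X) (z z' v : Y ⟶ Z),
      R.Mem x z → z ≼ z' → R.Mem u z' → u ≼ u' → R.Mem u' v → R.Mem x v

/-!
Relations are compared through their generalised elements, with composites written
diagrammatically (so `b ≫ g` is `g b`). Since an so-morphism `e` is orthogonal to the
ff-monomorphism `R ↣ X × Y`, membership of `(x, y)` in `R` may be tested on `(e ≫ x, e ≫ y)`; hence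
the elements of a composite `S ∘ R` may be assumed to come with a witness in the middle object.
If `R` is an ideal and `(x, b)` belongs to `g^* ∘ R`, such a witness satisfies `(x, y) ∈ R` and
`y ≼ b ≫ g`, so that `(x, b ≫ g) ∈ R`; conversely `b ≫ g` is itself a witness. Thus `g^* ∘ R` is the
inverse image of `R` along `1 × g`, dually `R ∘ f_*` is the inverse image along `f × 1`, and inverse
images preserve meets. The other two inclusions express monotonicity of composition.
-/

section

variable {C : Type u} [Category.{v} C] [OrdEnrichment C]

theorem homLe.refl {X Y : C} (f : X ⟶ Y) : f ≼ f :=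
  OrdEnrichment.ord_refl f

theorem homLe.precomp {X Y Z : C} {f g : Y ⟶ Z} (h : f ≼ g) (e : X ⟶ Y) : e ≫ f ≼ e ≫ g :=
  OrdEnrichment.precomp_ord e h

theorem homLe.postcomp {X Y Z : C} {f g : X ⟶ Y} (h : f ≼ g) (e : Y ⟶ Z) : f ≫ e ≼ g ≫ e :=
  OrdEnrichment.postcomp_ord e h

/-- Existence of a 2-product `X × Y` for every pair of objects: it turns a relation, encoded as a
jointly ff-monomorphic span, into an ff-monomorphism `R ↣ X × Y`. -/
def HasBinary2Products (C : Type u) [Category.{v} C] [OrdEnrichment C] : Prop :=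
  ∀ X Y : C, ∃ (P : C) (p : P ⟶ X) (q : P ⟶ Y), Is2Product X Y P p q

theorem Is2Product.hom_ext {X Y P D : C} {p : P ⟶ X} {q : P ⟶ Y} (hP : Is2Product X Y P p q)
    {a b : D ⟶ P} (hp : a ≫ p = b ≫ p) (hq : a ≫ q = b ≫ q) : a = b :=
  (hP.lift (b ≫ p) (b ≫ q)).unique ⟨hp, hq⟩ ⟨rfl, rfl⟩

namespace RelStr

variable {X Y D E : C} {R S : RelStr X Y} {x : D ⟶ X} {y : D ⟶ Y}

theorem mem_self (R : RelStr X Y) : R.Mem R.p R.q :=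
  ⟨𝟙 _, Category.id_comp _, Category.id_comp _⟩

theorem Mem.precomp (h : R.Mem x y) (e : E ⟶ D) : R.Mem (e ≫ x) (e ≫ y) := by
  obtain ⟨t, rfl, rfl⟩ := h
  exact ⟨e ≫ t, Category.assoc .., Category.assoc ..⟩

theorem Sub.refl (R : RelStr X Y) : R.Sub R :=
  R.mem_self

theorem Sub.mem (h : R.Sub S) (hxy : R.Mem x y) : S.Mem x y := by
  obtain ⟨t, rfl, rfl⟩ := hxy
  exact Mem.precomp h t

theorem sub_iff_forall_mem :
    R.Sub S ↔ ∀ {D : C} (x : D ⟶ X) (y : D ⟶ Y), R.Mem x y → S.Mem x y :=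
  ⟨fun h _ _ _ => h.mem, fun h => h _ _ R.mem_self⟩

theorem iso_of_forall_mem_iff
    (h : ∀ {D : C} (x : D ⟶ X) (y : D ⟶ Y), R.Mem x y ↔ S.Mem x y) : R.Iso S :=
  ⟨sub_iff_forall_mem.2 fun x y => (h x y).1, sub_iff_forall_mem.2 fun x y => (h x y).2⟩

theorem isFFMono_of_comp_eq {P : C} {m : R.obj ⟶ P} {p : P ⟶ X} {q : P ⟶ Y}
    (hp : m ≫ p = R.p) (hq : m ≫ q = R.q) : IsFFMono m where
  left a a' h := by
    refine R.jointly_ff a a' ?_ ?_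
    · simpa only [Category.assoc, hp] using h.postcomp p
    · simpa only [Category.assoc, hq] using h.postcomp q
  right.right_cancellation a a' h := by
    refine R.jointly_mono a a' ?_ ?_
    · simpa only [Category.assoc, hp] using h =≫ p
    · simpa only [Category.assoc, hq] using h =≫ q

end RelStr

theorem IsSO.mem_of_precomp_mem (hC : HasBinary2Products C) {D E X Y : C} {e : E ⟶ D}
    (he : IsSO e) {R : RelStr X Y} {x : D ⟶ X} {y : D ⟶ Y} (h : R.Mem (e ≫ x) (e ≫ y)) :
    R.Mem x y := by
  obtain ⟨P, p, q, hP⟩ := hC X Y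
  obtain ⟨m, ⟨hmp, hmq⟩, -⟩ := hP.lift R.p R.q
  obtain ⟨xy, ⟨rfl, rfl⟩, -⟩ := hP.lift x y
  obtain ⟨t, htp, htq⟩ := h
  have square : t ≫ m = e ≫ xy :=
    hP.hom_ext (by simp only [Category.assoc, hmp, htp]) (by simp only [Category.assoc, hmq, htq])
  obtain ⟨d, -, rfl⟩ := he m (RelStr.isFFMono_of_comp_eq hmp hmq) t xy square
  exact ⟨d, by rw [Category.assoc, hmp], by rw [Category.assoc, hmq]⟩

namespace IsMeetRel

variable {X Y : C} {R S M : RelStr X Y}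

theorem mem_iff (hM : IsMeetRel R S M) {D : C} {x : D ⟶ X} {y : D ⟶ Y} :
    M.Mem x y ↔ R.Mem x y ∧ S.Mem x y :=
  ⟨fun h => ⟨hM.1.mem h, hM.2.1.mem h⟩, fun h => hM.2.2 x y h.1 h.2⟩

theorem sub_of_sub (hM : IsMeetRel R S M) {T : RelStr X Y} (hR : T.Sub R) (hS : T.Sub S) :
    T.Sub M :=
  hM.2.2 T.p T.q hR hS

theorem isIdealRel (hM : IsMeetRel R S M) (hR : IsIdealRel R) (hS : IsIdealRel S) :
    IsIdealRel M := fun x x' y y' hx h hy =>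
  have ⟨hxyR, hxyS⟩ := hM.mem_iff.1 h
  hM.mem_iff.2 ⟨hR x x' y y' hx hxyR hy, hS x x' y y' hx hxyS hy⟩

end IsMeetRel

theorem IsStarRel.mem_iff {X Y : C} {f : X ⟶ Y} {F : RelStr X Y} (hF : IsStarRel f F) {D : C}
    {x : D ⟶ X} {y : D ⟶ Y} : F.Mem x y ↔ x ≫ f ≼ y := by
  constructor
  · rintro ⟨t, rfl, rfl⟩
    simpa only [Category.assoc, Category.comp_id] using homLe.precomp hF.le t
  · intro h
    exact (hF.lift x y (by rwa [Category.comp_id])).exists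

theorem IsCostarRel.mem_iff {X Y : C} {g : X ⟶ Y} {G : RelStr Y X} (hG : IsCostarRel g G) {D : C}
    {y : D ⟶ Y} {x : D ⟶ X} : G.Mem y x ↔ y ≼ x ≫ g := by
  constructor
  · rintro ⟨t, rfl, rfl⟩
    simpa only [Category.assoc, Category.comp_id] using homLe.precomp hG.le t
  · intro h
    exact (hG.lift y x (by rwa [Category.comp_id])).exists

namespace IsCompositeRel

variable {X Y Z : C}

theorem mem_of_mem_of_mem {R : RelStr X Y} {S : RelStr Y Z} {T : RelStr X Z}
    (hT : IsCompositeRel R S T) {D : C} {x : D ⟶ X} {y : D ⟶ Y} {z : D ⟶ Z} (hxy : R.Mem x y)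
    (hyz : S.Mem y z) : T.Mem x z := by
  obtain ⟨P, p₁, p₂, e, hP, -, hp, hq⟩ := hT
  obtain ⟨r, rfl, rfl⟩ := hxy
  obtain ⟨s, hs, rfl⟩ := hyz
  obtain ⟨w, ⟨rfl, rfl⟩, -⟩ := hP.lift r s hs.symm
  exact ⟨w ≫ e, by simp only [Category.assoc, hp], by simp only [Category.assoc, hq]⟩

theorem mem_of_forall_witness (hC : HasBinary2Products C) {R : RelStr X Y} {S : RelStr Y Z}
    {T : RelStr X Z} (hT : IsCompositeRel R S T) {U V : C} {N : RelStr U V} {a : X ⟶ U} {b : Z ⟶ V}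
    (h : ∀ {D : C} (x : D ⟶ X) (y : D ⟶ Y) (z : D ⟶ Z), R.Mem x y → S.Mem y z →
      N.Mem (x ≫ a) (z ≫ b))
    {D : C} {x : D ⟶ X} {z : D ⟶ Z} (hxz : T.Mem x z) : N.Mem (x ≫ a) (z ≫ b) := by
  obtain ⟨P, p₁, p₂, e, hP, he, hp, hq⟩ := hT
  obtain ⟨t, rfl, rfl⟩ := hxz
  have universal : N.Mem (T.p ≫ a) (T.q ≫ b) := by
    refine he.mem_of_precomp_mem hC ?_
    rw [← Category.assoc, hp, ← Category.assoc, hq]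
    exact h _ (p₁ ≫ R.q) _ (R.mem_self.precomp p₁) (hP.comm ▸ S.mem_self.precomp p₂)
  simpa only [Category.assoc] using universal.precomp t

theorem sub_of_sub (hC : HasBinary2Products C) {R R' : RelStr X Y} {S S' : RelStr Y Z}
    {T T' : RelStr X Z} (hT : IsCompositeRel R S T) (hT' : IsCompositeRel R' S' T')
    (hR : R.Sub R') (hS : S.Sub S') : T.Sub T' :=
  RelStr.sub_iff_forall_mem.2 fun x z hxz => by
    simpa only [Category.comp_id] using
      hT.mem_of_forall_witness hC (N := T') (a := 𝟙 X) (b := 𝟙 Z) (fun x y z hxy hyz => by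
        simpa only [Category.comp_id] using hT'.mem_of_mem_of_mem (hR.mem hxy) (hS.mem hyz)) hxz

theorem mem_iff_of_isCostarRel (hC : HasBinary2Products C) {R : RelStr X Y} (hR : IsIdealRel R)
    {g : Z ⟶ Y} {G : RelStr Y Z} (hG : IsCostarRel g G) {T : RelStr X Z}
    (hT : IsCompositeRel R G T) {D : C} {x : D ⟶ X} {z : D ⟶ Z} :
    T.Mem x z ↔ R.Mem x (z ≫ g) := by
  refine ⟨fun h => ?_, fun h => hT.mem_of_mem_of_mem h (hG.mem_iff.2 (homLe.refl _))⟩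
  simpa only [Category.comp_id] using
    hT.mem_of_forall_witness hC (N := R) (a := 𝟙 X) (b := g) (fun x y z hxy hyz => by
      rw [Category.comp_id]
      exact hR x x y (z ≫ g) (homLe.refl x) hxy (hG.mem_iff.1 hyz)) h

theorem mem_iff_of_isStarRel (hC : HasBinary2Products C) {S : RelStr Y Z} (hS : IsIdealRel S)
    {f : X ⟶ Y} {F : RelStr X Y} (hF : IsStarRel f F) {T : RelStr X Z}
    (hT : IsCompositeRel F S T) {D : C} {x : D ⟶ X} {z : D ⟶ Z} :
    T.Mem x z ↔ S.Mem (x ≫ f) z := by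
  refine ⟨fun h => ?_, fun h => hT.mem_of_mem_of_mem (hF.mem_iff.2 (homLe.refl _)) h⟩
  simpa only [Category.comp_id] using
    hT.mem_of_forall_witness hC (N := S) (a := f) (b := 𝟙 Z) (fun x y z hxy hyz => by
      rw [Category.comp_id]
      exact hS y (x ≫ f) z z (hF.mem_iff.1 hxy) hyz (homLe.refl z)) h

end IsCompositeRel

end

theorem statement4_general {C : Type u} [Category.{v} C] [OrdEnrichment C]
    (hC : HasBinary2Products C) {X Y A B : C} (R S : RelStr X Y) (hR : IsIdealRel R)
    (hS : IsIdealRel S) (g : B ⟶ Y) (f : A ⟶ X)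
    (Gco : RelStr Y B) (hGco : IsCostarRel g Gco)
    (Fstar : RelStr A X) (hFstar : IsStarRel f Fstar)
    (K : RelStr Y B) (H : RelStr A X)
    (M : RelStr X Y) (hM : IsMeetRel R S M) :
    (∀ T1 T2 T3 N : RelStr X B,
      IsCompositeRel M Gco T1 → IsCompositeRel R Gco T2 → IsCompositeRel S Gco T3 →
      IsMeetRel T2 T3 N → T1.Iso N) ∧
    (∀ T1 T2 T3 N : RelStr A Y,
      IsCompositeRel Fstar M T1 → IsCompositeRel Fstar R T2 → IsCompositeRel Fstar S T3 →
      IsMeetRel T2 T3 N → T1.Iso N) ∧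
    (∀ T1 T2 T3 N : RelStr X B,
      IsCompositeRel M K T1 → IsCompositeRel R K T2 → IsCompositeRel S K T3 →
      IsMeetRel T2 T3 N → T1.Sub N) ∧
    (∀ T1 T2 T3 N : RelStr A Y,
      IsCompositeRel H M T1 → IsCompositeRel H R T2 → IsCompositeRel H S T3 →
      IsMeetRel T2 T3 N → T1.Sub N) := by
  have hMideal : IsIdealRel M := hM.isIdealRel hR hS
  refine ⟨fun T1 T2 T3 N h1 h2 h3 hN => RelStr.iso_of_forall_mem_iff fun x b => ?_,
    fun T1 T2 T3 N h1 h2 h3 hN => RelStr.iso_of_forall_mem_iff fun a y => ?_,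
    fun T1 T2 T3 N h1 h2 h3 hN => hN.sub_of_sub ?_ ?_,
    fun T1 T2 T3 N h1 h2 h3 hN => hN.sub_of_sub ?_ ?_⟩
  · rw [h1.mem_iff_of_isCostarRel hC hMideal hGco, hM.mem_iff, hN.mem_iff,
      h2.mem_iff_of_isCostarRel hC hR hGco, h3.mem_iff_of_isCostarRel hC hS hGco]
  · rw [h1.mem_iff_of_isStarRel hC hMideal hFstar, hM.mem_iff, hN.mem_iff,
      h2.mem_iff_of_isStarRel hC hR hFstar, h3.mem_iff_of_isStarRel hC hS hFstar]
  · exact h1.sub_of_sub hC h2 hM.1 (.refl K)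
  · exact h1.sub_of_sub hC h3 hM.2.1 (.refl K)
  · exact h1.sub_of_sub hC h2 (.refl H) hM.1
  · exact h1.sub_of_sub hC h3 (.refl H) hM.2.1

/-- Distribution of composition with comma-object ideals over meets of ideals. -/
theorem statement4 {C : Type u} [Category.{v} C] [OrdEnrichment C] (hC : IsRegularOrd C)
    {X Y A B : C} (R S : RelStr X Y) (hR : IsIdealRel R) (hS : IsIdealRel S)
    (g : B ⟶ Y) (f : A ⟶ X) (k : Y ⟶ B) (h : X ⟶ A)
    (Gco : RelStr Y B) (hGco : IsCostarRel g Gco)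
    (Fstar : RelStr A X) (hFstar : IsStarRel f Fstar)
    (Kstar : RelStr Y B) (hKstar : IsStarRel k Kstar)
    (Hco : RelStr A X) (hHco : IsCostarRel h Hco)
    (M : RelStr X Y) (hM : IsMeetRel R S M) :
    -- (1) `g^* ∘ (R ∧ S) ≅ (g^* ∘ R) ∧ (g^* ∘ S)`
    (∀ (T1 : RelStr X B) (T2 : RelStr X B) (T3 : RelStr X B) (N : RelStr X B),
      IsCompositeRel M Gco T1 → IsCompositeRel R Gco T2 → IsCompositeRel S Gco T3 →
      IsMeetRel T2 T3 N → T1.Iso N) ∧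
    -- (2) `(R ∧ S) ∘ f_* ≅ (R ∘ f_*) ∧ (S ∘ f_*)`
    (∀ (T1 : RelStr A Y) (T2 : RelStr A Y) (T3 : RelStr A Y) (N : RelStr A Y),
      IsCompositeRel Fstar M T1 → IsCompositeRel Fstar R T2 → IsCompositeRel Fstar S T3 →
      IsMeetRel T2 T3 N → T1.Iso N) ∧
    -- (3) `k_* ∘ (R ∧ S) ⊆ (k_* ∘ R) ∧ (k_* ∘ S)`
    (∀ (T1 : RelStr X B) (T2 : RelStr X B) (T3 : RelStr X B) (N : RelStr X B),
      IsCompositeRel M Kstar T1 → IsCompositeRel R Kstar T2 → IsCompositeRel S Kstar T3 →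
      IsMeetRel T2 T3 N → T1.Sub N) ∧
    -- (4) `(R ∧ S) ∘ h^* ⊆ (R ∘ h^*) ∧ (S ∘ h^*)`
    (∀ (T1 : RelStr A Y) (T2 : RelStr A Y) (T3 : RelStr A Y) (N : RelStr A Y),
      IsCompositeRel Hco M T1 → IsCompositeRel Hco R T2 → IsCompositeRel Hco S T3 →
      IsMeetRel T2 T3 N → T1.Sub N) :=
  statement4_general hC.has2Products R S hR hS g f Gco hGco Fstar hFstar Kstar Hco M hM
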